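/- D is a *-SH domain of type 1 (i.e., for every nonzero nonunit x of D, xD is a *-product of finitely many *-homogeneous ideals of type 1) if and only if D is a *-SH domain in which every maximal *-ideal has height 1. -/

import Mathlib

open scoped nonZeroDivisors

/-- A star operation on the nonzero fractional ideals of an integral domain `D`
with quotient field `K`: it fixes nonzero principal fractional ideals, commutes with
multiplication by nonzero principal fractional ideals, is extensive, monotone and
idempotent (on nonzero fractional ideals). -/
structure StarOperation (D K : Type*) [CommRing D] [IsDomain D] [Field K]
    [Algebra D K] [IsFractionRing D K] where
  star : FractionalIdeal D⁰ K → FractionalIdeal D⁰ K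
  star_spanSingleton : ∀ x : K, x ≠ 0 →
    star (FractionalIdeal.spanSingleton D⁰ x) = FractionalIdeal.spanSingleton D⁰ x
  star_smul : ∀ (x : K) (I : FractionalIdeal D⁰ K), x ≠ 0 → I ≠ 0 →
    star (FractionalIdeal.spanSingleton D⁰ x * I) = FractionalIdeal.spanSingleton D⁰ x * star I
  le_star : ∀ I : FractionalIdeal D⁰ K, I ≠ 0 → I ≤ star I
  star_mono : ∀ I J : FractionalIdeal D⁰ K, I ≠ 0 → J ≠ 0 → I ≤ J → star I ≤ star J
  star_idem : ∀ I : FractionalIdeal D⁰ K, I ≠ 0 → star (star I) = star I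

namespace StarOperation

variable {D K : Type*} [CommRing D] [IsDomain D] [Field K] [Algebra D K] [IsFractionRing D K]
variable (s : StarOperation D K)

/-- `*` has finite character: for every nonzero fractional ideal `I`, `I^*` is the union
of `J^*` over the nonzero finitely generated fractional subideals `J` of `I`. -/
def FiniteCharacter : Prop :=
  ∀ I : FractionalIdeal D⁰ K, I ≠ 0 → ∀ x ∈ s.star I,
    ∃ J : FractionalIdeal D⁰ K, J ≠ 0 ∧ (J : Submodule D K).FG ∧ J ≤ I ∧ x ∈ s.star J

/-- A (nonzero) integral ideal `I` of `D` is a `*`-ideal if `I^* = I`. -/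
def IsStarIdeal (I : Ideal D) : Prop :=
  I ≠ ⊥ ∧ s.star (I : FractionalIdeal D⁰ K) = (I : FractionalIdeal D⁰ K)

/-- An integral ideal `I` of `D` is a `*`-ideal of finite type if `I = J^*` for some
nonzero finitely generated ideal `J`. -/
def IsFiniteTypeStarIdeal (I : Ideal D) : Prop :=
  ∃ J : Ideal D, J ≠ ⊥ ∧ J.FG ∧
    s.star (J : FractionalIdeal D⁰ K) = (I : FractionalIdeal D⁰ K)

/-- A maximal `*`-ideal: maximal among proper integral `*`-ideals. -/
def IsMaxStarIdeal (M : Ideal D) : Prop :=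
  M ≠ ⊤ ∧ s.IsStarIdeal M ∧ ∀ J : Ideal D, J ≠ ⊤ → s.IsStarIdeal J → M ≤ J → J = M

/-- `I` is `*`-homogeneous: a proper `*`-ideal of finite type such that `(J + J')^* ≠ D`
for every pair `J`, `J'` of proper `*`-ideals of finite type containing `I`. -/
def IsHomog (I : Ideal D) : Prop :=
  I ≠ ⊤ ∧ s.IsStarIdeal I ∧ s.IsFiniteTypeStarIdeal I ∧
    ∀ J J' : Ideal D, J ≠ ⊤ → J' ≠ ⊤ → s.IsStarIdeal J → s.IsStarIdeal J' →
      s.IsFiniteTypeStarIdeal J → s.IsFiniteTypeStarIdeal J' → I ≤ J → I ≤ J' →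
      s.star ((J + J' : Ideal D) : FractionalIdeal D⁰ K) ≠ 1

/-- The set `M(I) = {x ∈ D : (xD + I)^* ≠ D}` attached to an ideal `I`. -/
def MSet (I : Ideal D) : Set D :=
  {x : D | s.star ((Ideal.span {x} + I : Ideal D) : FractionalIdeal D⁰ K) ≠ 1}

/-- `A` and `B` are `*`-comaximal if `(A + B)^* = D`. -/
def StarComaximal (A B : Ideal D) : Prop :=
  s.star ((A + B : Ideal D) : FractionalIdeal D⁰ K) = 1

/-- An integral ideal `I` is `*`-invertible if `(I · I⁻¹)^* = D`. -/
def StarInvertible (I : Ideal D) : Prop :=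
  s.star ((I : FractionalIdeal D⁰ K) * (I : FractionalIdeal D⁰ K)⁻¹) = 1

/-- `D` is a `*`-SH domain: every principal ideal generated by a nonzero nonunit is a
`*`-product of finitely many `*`-homogeneous ideals. -/
def IsSHDomain : Prop :=
  ∀ x : D, x ≠ 0 → ¬IsUnit x →
    ∃ T : Multiset (Ideal D), (∀ J ∈ T, s.IsHomog J) ∧
      s.star ((T.prod : Ideal D) : FractionalIdeal D⁰ K) =
        ((Ideal.span {x} : Ideal D) : FractionalIdeal D⁰ K)

/-- `D` has finite `*`-character: every nonzero nonunit lies in only finitely many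
maximal `*`-ideals. -/
def FiniteStarCharacter : Prop :=
  ∀ x : D, x ≠ 0 → ¬IsUnit x → {P : Ideal D | s.IsMaxStarIdeal P ∧ x ∈ P}.Finite

end StarOperation

namespace StarOperation

variable {D K : Type*} [CommRing D] [IsDomain D] [Field K] [Algebra D K] [IsFractionRing D K]

/-- A `*`-homogeneous ideal `I` is of type 1 if for every nonzero `x ∈ M(I)` there is a
positive integer `n` with `xⁿD_{M(I)} ∩ D ⊆ I`. -/
def IsHomogType1 (s : StarOperation D K) (I : Ideal D) : Prop :=
  s.IsHomog I ∧
    ∀ (M : Ideal D) [M.IsPrime], (M : Set D) = s.MSet I →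
      ∀ x ∈ M, x ≠ (0 : D) → ∃ n : ℕ, 0 < n ∧
        Ideal.comap (algebraMap D (Localization.AtPrime M))
          (Ideal.map (algebraMap D (Localization.AtPrime M)) (Ideal.span {x ^ n})) ≤ I

end StarOperation

/-! Fix a maximal `*`-ideal `P`. A `*`-homogeneous ideal `I ⊆ P` satisfies `M(I) = P`, and every
`t ∉ P` is `*`-comaximal with `I`, so it can be cancelled modulo `I`; hence `I` is contracted from
the localization at `P`. Being of type 1 then says that `P D_P` is the radical of `I D_P`, that is,
that `P` is a minimal prime over `I`. In a `*`-SH domain every nonzero prime inside `P` contains a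
`*`-homogeneous factor of each of its nonzero elements, so all the homogeneous factors have their
maximal `*`-ideal as a minimal prime exactly when the maximal `*`-ideals have height one. -/

theorem exists_fg_le_sup_of_fg {R M : Type*} [Semiring R] [AddCommMonoid M] [Module R M]
    {A B N : Submodule R M} (hN : N.FG) (h : N ≤ A ⊔ B) :
    ∃ F ≤ B, F.FG ∧ N ≤ A ⊔ F := by
  induction N, hN using Submodule.fg_induction with
  | singleton x =>
    obtain ⟨a, ha, b, hb, hab⟩ :=
      Submodule.mem_sup.1 (h (Submodule.mem_span_singleton_self x))
    refine ⟨R ∙ b, by simpa, Submodule.fg_span_singleton b, ?_⟩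
    rw [Submodule.span_singleton_le_iff_mem, ← hab]
    exact Submodule.add_mem_sup ha (Submodule.mem_span_singleton_self b)
  | sup N₁ N₂ _ _ ih₁ ih₂ =>
    obtain ⟨F₁, hF₁B, hF₁, h₁⟩ := ih₁ (le_sup_left.trans h)
    obtain ⟨F₂, hF₂B, hF₂, h₂⟩ := ih₂ (le_sup_right.trans h)
    exact ⟨F₁ ⊔ F₂, sup_le hF₁B hF₂B, hF₁.sup hF₂,
      sup_le (h₁.trans (by gcongr; exact le_sup_left)) (h₂.trans (by gcongr; exact le_sup_right))⟩

namespace StarOperation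

variable {D K : Type*} [CommRing D] [IsDomain D] [Field K] [Algebra D K] [IsFractionRing D K]

section IdealClosure

variable (s : StarOperation D K)

theorem star_one : s.star 1 = 1 := by
  simpa using s.star_spanSingleton 1 one_ne_zero

theorem star_coeIdeal_le_one {I : Ideal D} (hI : I ≠ ⊥) :
    s.star (I : FractionalIdeal D⁰ K) ≤ 1 := by
  rw [← s.star_one]
  exact s.star_mono _ _ (by simpa using hI) one_ne_zero FractionalIdeal.coeIdeal_le_one

open Classical in
/-- The integral ideal `I^*`. A star operation is only meaningful on nonzero ideals; the zero ideal
is sent to itself. -/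
noncomputable def integralStar (I : Ideal D) : Ideal D :=
  if I = ⊥ then ⊥ else (s.star (I : FractionalIdeal D⁰ K) : Submodule D K).comap
    (Algebra.linearMap D K)

theorem coe_integralStar {I : Ideal D} (hI : I ≠ ⊥) :
    (s.integralStar I : FractionalIdeal D⁰ K) = s.star I := by
  obtain ⟨J, hJ⟩ :=
    FractionalIdeal.le_one_iff_exists_coeIdeal.1 (s.star_coeIdeal_le_one hI)
  suffices s.integralStar I = J by rw [this, hJ]
  ext x
  rw [integralStar, if_neg hI, ← hJ]
  simp

theorem le_integralStar_iff {I J : Ideal D} (hJ : J ≠ ⊥) :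
    I ≤ s.integralStar J ↔ (I : FractionalIdeal D⁰ K) ≤ s.star J := by
  rw [← s.coe_integralStar hJ, FractionalIdeal.coeIdeal_le_coeIdeal]

theorem le_integralStar (I : Ideal D) : I ≤ s.integralStar I := by
  rcases eq_or_ne I ⊥ with rfl | hI
  · exact bot_le
  · exact (s.le_integralStar_iff hI).2 (s.le_star _ (by simpa using hI))

theorem integralStar_le_integralStar_of_le {I J : Ideal D} (hIJ : I ≤ s.integralStar J) :
    s.integralStar I ≤ s.integralStar J := by
  rcases eq_or_ne I ⊥ with rfl | hI
  · simp [integralStar]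
  have hJ : J ≠ ⊥ := by
    rintro rfl
    exact hI (by simpa [integralStar] using hIJ)
  rw [s.le_integralStar_iff hJ] at hIJ ⊢
  have hI₀ : (I : FractionalIdeal D⁰ K) ≠ 0 := by simpa using hI
  calc (s.integralStar I : FractionalIdeal D⁰ K) = s.star I := s.coe_integralStar hI
    _ ≤ s.star (s.star J) := s.star_mono _ _ hI₀ (ne_bot_of_le_ne_bot hI₀ hIJ) hIJ
    _ = s.star J := s.star_idem _ (by simpa using hJ)

/-- The closure operator `I ↦ I^*` on the integral ideals of `D`; its nonzero closed elements are
the `*`-ideals. -/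
noncomputable def idealClosure : ClosureOperator (Ideal D) :=
  .mk₂ s.integralStar s.le_integralStar fun _ _ ↦ s.integralStar_le_integralStar_of_le

theorem coe_idealClosure {I : Ideal D} (hI : I ≠ ⊥) :
    (s.idealClosure I : FractionalIdeal D⁰ K) = s.star I :=
  s.coe_integralStar hI

@[simp]
theorem idealClosure_bot : s.idealClosure ⊥ = ⊥ :=
  if_pos rfl

theorem idealClosure_ne_bot {I : Ideal D} (hI : I ≠ ⊥) : s.idealClosure I ≠ ⊥ :=
  ne_bot_of_le_ne_bot hI (s.idealClosure.le_closure I)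

theorem star_coeIdeal_eq_coeIdeal_iff {I J : Ideal D} (hI : I ≠ ⊥) :
    s.star (I : FractionalIdeal D⁰ K) = J ↔ s.idealClosure I = J := by
  rw [← s.coe_idealClosure hI, FractionalIdeal.coeIdeal_inj]

theorem star_coeIdeal_eq_one_iff {I : Ideal D} (hI : I ≠ ⊥) :
    s.star (I : FractionalIdeal D⁰ K) = 1 ↔ s.idealClosure I = ⊤ := by
  rw [← FractionalIdeal.coeIdeal_top, s.star_coeIdeal_eq_coeIdeal_iff hI]

theorem isStarIdeal_iff {I : Ideal D} :
    s.IsStarIdeal I ↔ I ≠ ⊥ ∧ s.idealClosure.IsClosed I :=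
  and_congr_right fun hI ↦
    (s.star_coeIdeal_eq_coeIdeal_iff hI).trans s.idealClosure.isClosed_iff.symm

theorem isStarIdeal_idealClosure {I : Ideal D} (hI : I ≠ ⊥) :
    s.IsStarIdeal (s.idealClosure I) :=
  s.isStarIdeal_iff.2 ⟨s.idealClosure_ne_bot hI, s.idealClosure.isClosed_closure I⟩

theorem isFiniteTypeStarIdeal_iff {I : Ideal D} :
    s.IsFiniteTypeStarIdeal I ↔ ∃ J : Ideal D, J ≠ ⊥ ∧ J.FG ∧ s.idealClosure J = I :=
  exists_congr fun _ ↦ and_congr_right fun hJ ↦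
    and_congr_right fun _ ↦ s.star_coeIdeal_eq_coeIdeal_iff hJ

theorem idealClosure_span_singleton_mul (a : D) (I : Ideal D) :
    s.idealClosure (Ideal.span {a} * I) = Ideal.span {a} * s.idealClosure I := by
  rcases eq_or_ne a 0 with rfl | ha
  · simp
  rcases eq_or_ne I ⊥ with rfl | hI
  · simp
  have haI : Ideal.span {a} * I ≠ ⊥ := by simp [ha, hI]
  rw [← s.star_coeIdeal_eq_coeIdeal_iff haI]
  simp only [FractionalIdeal.coeIdeal_mul, FractionalIdeal.coeIdeal_span_singleton,
    s.coe_idealClosure hI]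
  exact s.star_smul _ _ (by simpa using ha) (by simpa using hI)

theorem mul_idealClosure_le (A B : Ideal D) :
    A * s.idealClosure B ≤ s.idealClosure (A * B) := by
  refine Ideal.mul_le.2 fun a ha b hb ↦ ?_
  have hab : a * b ∈ s.idealClosure (Ideal.span {a} * B) := by
    rw [s.idealClosure_span_singleton_mul]
    exact Ideal.mul_mem_mul (Ideal.mem_span_singleton_self a) hb
  exact s.idealClosure.monotone (Ideal.mul_mono_left (by simpa using ha)) hab

variable {s}

theorem le_of_mul_le_of_idealClosure_sup_eq_top {A B J : Ideal D} (hJ : s.idealClosure.IsClosed J)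
    (hBJ : s.idealClosure (B ⊔ J) = ⊤) (h : A * B ≤ J) : A ≤ J := calc
  A = A * s.idealClosure (B ⊔ J) := by rw [hBJ, Ideal.mul_top]
  _ ≤ s.idealClosure (A * (B ⊔ J)) := s.mul_idealClosure_le _ _
  _ ≤ J := hJ.closure_le_iff.2 (by rw [Ideal.mul_sup]; exact sup_le h Ideal.mul_le_right)

theorem exists_fg_mem_idealClosure (hs : s.FiniteCharacter) {I : Ideal D} {x : D}
    (hx : x ∈ s.idealClosure I) : ∃ J ≤ I, J.FG ∧ x ∈ s.idealClosure J := by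
  rcases eq_or_ne I ⊥ with rfl | hI
  · exact ⟨⊥, le_rfl, Submodule.fg_bot, hx⟩
  have hx' : algebraMap D K x ∈ s.star (I : FractionalIdeal D⁰ K) := by
    rw [← s.coe_idealClosure hI]
    exact FractionalIdeal.mem_coeIdeal_of_mem D⁰ hx
  obtain ⟨J, hJ0, hJ, hJI, hxJ⟩ := hs I (by simpa using hI) _ hx'
  obtain ⟨J, rfl⟩ := FractionalIdeal.le_one_iff_exists_coeIdeal.1
    (hJI.trans FractionalIdeal.coeIdeal_le_one)
  refine ⟨J, (FractionalIdeal.coeIdeal_le_coeIdeal K).1 hJI,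
    (FractionalIdeal.coeIdeal_fg D⁰ (IsFractionRing.injective D K) J).1 hJ, ?_⟩
  rw [← s.coe_idealClosure (by simpa using hJ0)] at hxJ
  simpa using hxJ

theorem exists_fg_idealClosure_sup_eq_top (hs : s.FiniteCharacter) {A B : Ideal D}
    (h : s.idealClosure (A ⊔ B) = ⊤) : ∃ F ≤ B, F.FG ∧ s.idealClosure (A ⊔ F) = ⊤ := by
  obtain ⟨J, hJ, hJfg, h1⟩ := exists_fg_mem_idealClosure hs ((Ideal.eq_top_iff_one _).1 h)
  obtain ⟨F, hFB, hF, hJF⟩ := exists_fg_le_sup_of_fg hJfg hJ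
  exact ⟨F, hFB, hF, (Ideal.eq_top_iff_one _).2 (s.idealClosure.monotone hJF h1)⟩

theorem isClosed_sSup_of_directedOn (hs : s.FiniteCharacter) {c : Set (Ideal D)}
    (hc : c.Nonempty) (hdir : DirectedOn (· ≤ ·) c) (hcl : ∀ J ∈ c, s.idealClosure.IsClosed J) :
    s.idealClosure.IsClosed (sSup c) := by
  refine ClosureOperator.isClosed_iff_closure_le.2 fun x hx ↦ ?_
  obtain ⟨F, hF, hFfg, hxF⟩ := exists_fg_mem_idealClosure hs hx
  obtain ⟨J, hJ, hFJ⟩ := (CompleteLattice.isCompactElement_iff_le_of_directed_sSup_le _ F).1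
    ((Submodule.fg_iff_compact F).1 hFfg) c hc hdir hF
  exact le_sSup hJ ((hcl J hJ).closure_le_iff.2 hFJ hxF)

end IdealClosure

variable {s : StarOperation D K}

section IsMaxStarIdeal

variable {P : Ideal D}

theorem exists_le_isMaxStarIdeal (hs : s.FiniteCharacter) {I : Ideal D} (hI : s.IsStarIdeal I)
    (hI' : I ≠ ⊤) : ∃ P, s.IsMaxStarIdeal P ∧ I ≤ P := by
  have sSup_mem {c : Set (Ideal D)} (hc : c ⊆ {J | J ≠ ⊤ ∧ s.IsStarIdeal J})
      (hchain : IsChain (· ≤ ·) c) {J : Ideal D} (hJ : J ∈ c) :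
      sSup c ≠ ⊤ ∧ s.IsStarIdeal (sSup c) := by
    refine ⟨?_, s.isStarIdeal_iff.2 ⟨?_, ?_⟩⟩
    · rw [Ne, Ideal.eq_top_iff_one, Submodule.mem_sSup_of_directed ⟨J, hJ⟩ hchain.directedOn]
      rintro ⟨L, hL, h1⟩
      exact (hc hL).1 ((Ideal.eq_top_iff_one L).2 h1)
    · exact ne_bot_of_le_ne_bot (hc hJ).2.1 (le_sSup hJ)
    · exact isClosed_sSup_of_directedOn hs ⟨J, hJ⟩ hchain.directedOn
        fun L hL ↦ (s.isStarIdeal_iff.1 (hc hL).2).2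
  obtain ⟨P, hIP, hP⟩ := zorn_le_nonempty₀ {J | J ≠ ⊤ ∧ s.IsStarIdeal J}
    (fun c hc hchain J hJ ↦ ⟨sSup c, sSup_mem hc hchain hJ, fun _ ↦ le_sSup⟩) I ⟨hI', hI⟩
  exact ⟨P, ⟨hP.prop.1, hP.prop.2, fun J hJ hJ' hPJ ↦ (hP.eq_of_le ⟨hJ, hJ'⟩ hPJ).symm⟩, hIP⟩

theorem IsMaxStarIdeal.isClosed (hP : s.IsMaxStarIdeal P) : s.idealClosure.IsClosed P :=
  (s.isStarIdeal_iff.1 hP.2.1).2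

theorem IsMaxStarIdeal.idealClosure_ne_top_of_le (hP : s.IsMaxStarIdeal P) {I : Ideal D}
    (hI : I ≤ P) : s.idealClosure I ≠ ⊤ :=
  ne_top_of_le_ne_top hP.1 (ClosureOperator.closure_min hI hP.isClosed)

theorem IsMaxStarIdeal.idealClosure_span_singleton_sup_eq_top (hP : s.IsMaxStarIdeal P) {x : D}
    (hx : x ∉ P) : s.idealClosure (Ideal.span {x} ⊔ P) = ⊤ := by
  have hle : Ideal.span {x} ⊔ P ≤ s.idealClosure (Ideal.span {x} ⊔ P) :=
    s.idealClosure.le_closure _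
  by_contra htop
  have heq := hP.2.2 _ htop
    (s.isStarIdeal_idealClosure (ne_bot_of_le_ne_bot hP.2.1.1 le_sup_right))
    (le_sup_right.trans hle)
  rw [heq] at hle
  exact hx (hle (Ideal.mem_sup_left (Ideal.mem_span_singleton_self x)))

theorem IsMaxStarIdeal.isPrime (hP : s.IsMaxStarIdeal P) : P.IsPrime where
  ne_top' := hP.1
  mem_or_mem' {a b} hab := by
    by_contra! ⟨ha, hb⟩
    refine hb ((Ideal.span_singleton_le_iff_mem P).1
      (le_of_mul_le_of_idealClosure_sup_eq_top hP.isClosed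
        (hP.idealClosure_span_singleton_sup_eq_top ha) ?_))
    rwa [Ideal.span_singleton_mul_span_singleton, Ideal.span_singleton_le_iff_mem, mul_comm]

end IsMaxStarIdeal

section IsHomog

variable {I P : Ideal D}

theorem mem_mSet_iff (hI : I ≠ ⊥) {x : D} :
    x ∈ s.MSet I ↔ s.idealClosure (Ideal.span {x} ⊔ I) ≠ ⊤ :=
  (s.star_coeIdeal_eq_one_iff (ne_bot_of_le_ne_bot hI le_sup_right)).not

theorem IsHomog.isClosed (hI : s.IsHomog I) : s.idealClosure.IsClosed I :=
  (s.isStarIdeal_iff.1 hI.2.1).2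

theorem IsHomog.ne_bot (hI : s.IsHomog I) : I ≠ ⊥ :=
  hI.2.1.1

theorem IsHomog.idealClosure_sup_ne_top (hI : s.IsHomog I) {A B : Ideal D} (hA : A.FG) (hB : B.FG)
    (hIA : I ≤ s.idealClosure A) (hIB : I ≤ s.idealClosure B) (hA' : s.idealClosure A ≠ ⊤)
    (hB' : s.idealClosure B ≠ ⊤) : s.idealClosure (A ⊔ B) ≠ ⊤ := by
  have ne_bot {C : Ideal D} (hIC : I ≤ s.idealClosure C) : C ≠ ⊥ := by
    rintro rfl
    exact hI.ne_bot (by simpa using hIC)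
  have isFiniteType {C : Ideal D} (hC : C.FG) (hIC : I ≤ s.idealClosure C) :
      s.IsFiniteTypeStarIdeal (s.idealClosure C) :=
    s.isFiniteTypeStarIdeal_iff.2 ⟨C, ne_bot hIC, hC, rfl⟩
  have h := hI.2.2.2 _ _ hA' hB' (s.isStarIdeal_idealClosure (ne_bot hIA))
    (s.isStarIdeal_idealClosure (ne_bot hIB)) (isFiniteType hA hIA) (isFiniteType hB hIB) hIA hIB
  rwa [Ideal.add_eq_sup, Ne,
    s.star_coeIdeal_eq_one_iff (ne_bot_of_le_ne_bot hI.ne_bot (hIA.trans le_sup_left)),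
    s.idealClosure.closure_sup_closure] at h

theorem IsHomog.mSet_eq (hs : s.FiniteCharacter) (hI : s.IsHomog I) (hP : s.IsMaxStarIdeal P)
    (hIP : I ≤ P) : s.MSet I = P := by
  ext x
  rw [mem_mSet_iff hI.ne_bot, SetLike.mem_coe]
  refine ⟨fun hx ↦ ?_, fun hx ↦ hP.idealClosure_ne_top_of_le (sup_le (by simpa using hx) hIP)⟩
  by_contra hxP
  obtain ⟨F, hFP, hF, hxF⟩ :=
    exists_fg_idealClosure_sup_eq_top hs (hP.idealClosure_span_singleton_sup_eq_top hxP)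
  obtain ⟨G, -, hG, rfl⟩ := s.isFiniteTypeStarIdeal_iff.1 hI.2.2.1
  rw [s.idealClosure.closure_sup_closure_right] at hx
  have hGP : G ≤ P := (s.idealClosure.le_closure G).trans hIP
  refine hI.idealClosure_sup_ne_top (A := Ideal.span {x} ⊔ G) (B := F ⊔ G)
    ((Submodule.fg_span_singleton x).sup hG) (Submodule.FG.sup hF hG)
    (s.idealClosure.monotone le_sup_right) (s.idealClosure.monotone le_sup_right)
    hx (hP.idealClosure_ne_top_of_le (sup_le hFP hGP)) (top_le_iff.1 ?_)
  rw [← hxF]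
  exact s.idealClosure.monotone (sup_le_sup le_sup_left le_sup_left)

theorem IsHomog.mem_of_mul_mem (hI : s.IsHomog I) {t x : D} (ht : t ∉ s.MSet I)
    (htx : t * x ∈ I) : x ∈ I := by
  rw [mem_mSet_iff hI.ne_bot, not_not] at ht
  rw [← Ideal.span_singleton_le_iff_mem]
  refine le_of_mul_le_of_idealClosure_sup_eq_top hI.isClosed ht ?_
  rwa [Ideal.span_singleton_mul_span_singleton, Ideal.span_singleton_le_iff_mem, mul_comm]

theorem IsHomog.comap_map_localization_eq (hI : s.IsHomog I) [P.IsPrime]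
    (hP : (P : Set D) = s.MSet I) :
    (I.map (algebraMap D (Localization.AtPrime P))).comap
      (algebraMap D (Localization.AtPrime P)) = I := by
  refine le_antisymm (fun x hx ↦ ?_) Ideal.le_comap_map
  obtain ⟨t, ht, htx⟩ :=
    (IsLocalization.algebraMap_mem_map_algebraMap_iff P.primeCompl _ I x).1 hx
  exact hI.mem_of_mul_mem (hP ▸ ht) htx

theorem IsHomogType1.mem_minimalPrimes (hs : s.FiniteCharacter) (hI : s.IsHomogType1 I)
    (hP : s.IsMaxStarIdeal P) (hIP : I ≤ P) : P ∈ I.minimalPrimes := by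
  have := hP.isPrime
  refine ⟨⟨hP.isPrime, hIP⟩, fun Q ⟨hQ, hIQ⟩ _ x hx ↦ ?_⟩
  rcases eq_or_ne x 0 with rfl | hx0
  · exact Q.zero_mem
  obtain ⟨n, -, hn⟩ := hI.2 P (hI.1.mSet_eq hs hP hIP).symm x hx hx0
  exact hQ.mem_of_pow_mem n (hIQ (hn (Ideal.le_comap_map (Ideal.mem_span_singleton_self _))))

theorem IsHomog.isHomogType1_of_mem_minimalPrimes (hs : s.FiniteCharacter) (hI : s.IsHomog I)
    (hP : s.IsMaxStarIdeal P) (hIP : P ∈ I.minimalPrimes) : s.IsHomogType1 I := by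
  refine ⟨hI, fun M _ hM x hx _ ↦ ?_⟩
  obtain rfl : M = P := SetLike.coe_injective (hM.trans (hI.mSet_eq hs hP hIP.1.2))
  set φ := algebraMap D (Localization.AtPrime M)
  have hrad : φ x ∈ (I.map φ).radical := by
    rw [IsLocalization.AtPrime.radical_map_of_mem_minimalPrimes _ M I hIP]
    exact Ideal.mem_map_of_mem φ hx
  obtain ⟨n, hn⟩ := hrad
  refine ⟨n + 1, n.succ_pos, le_of_le_of_eq (Ideal.comap_mono ?_) (hI.comap_map_localization_eq hM)⟩
  rw [Ideal.map_span, Set.image_singleton, Ideal.span_singleton_le_iff_mem, map_pow, pow_succ]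
  exact Ideal.mul_mem_right _ _ hn

end IsHomog

theorem exists_mem_le_of_star_prod_eq_span {Q : Ideal D} (hQ : Q.IsPrime) {x : D} (hx : x ∈ Q)
    {T : Multiset (Ideal D)} (hT : ⊥ ∉ T)
    (h : s.star ((T.prod : Ideal D) : FractionalIdeal D⁰ K) = (Ideal.span {x} : Ideal D)) :
    ∃ J ∈ T, J ≤ Q := by
  rw [s.star_coeIdeal_eq_coeIdeal_iff (mt Multiset.prod_eq_zero_iff.1 hT)] at h
  rw [← Ideal.IsPrime.multiset_prod_le hQ]
  calc T.prod ≤ s.idealClosure T.prod := s.idealClosure.le_closure _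
    _ = Ideal.span {x} := h
    _ ≤ Q := (Ideal.span_singleton_le_iff_mem Q).2 hx

end StarOperation

/-- `D` is a `*`-SH domain of type 1 iff `D` is a `*`-SH domain in which
every maximal `*`-ideal has height 1. -/
theorem isSHDomainType1_iff {D K : Type*} [CommRing D] [IsDomain D] [Field K]
    [Algebra D K] [IsFractionRing D K] (s : StarOperation D K) (hs : s.FiniteCharacter) :
    (∀ x : D, x ≠ 0 → ¬IsUnit x →
      ∃ T : Multiset (Ideal D), (∀ J ∈ T, s.IsHomogType1 J) ∧
        s.star ((T.prod : Ideal D) : FractionalIdeal D⁰ K) =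
          ((Ideal.span {x} : Ideal D) : FractionalIdeal D⁰ K)) ↔
    (s.IsSHDomain ∧ ∀ P : Ideal D, s.IsMaxStarIdeal P →
      P ≠ ⊥ ∧ ∀ Q : Ideal D, Q.IsPrime → Q < P → Q = ⊥) := by
  refine ⟨fun h ↦ ⟨fun x hx hxu ↦ ?_, fun P hP ↦ ⟨hP.2.1.1, fun Q hQ hQP ↦ ?_⟩⟩,
    fun ⟨hSH, hht⟩ x hx hxu ↦ ?_⟩
  · obtain ⟨T, hT, hTx⟩ := h x hx hxu
    exact ⟨T, fun J hJ ↦ (hT J hJ).1, hTx⟩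
  · by_contra hQ0
    obtain ⟨x, hxQ, hx⟩ := Submodule.exists_mem_ne_zero_of_ne_bot hQ0
    obtain ⟨T, hT, hTx⟩ := h x hx fun hxu ↦ hQ.ne_top (Q.eq_top_of_isUnit_mem hxQ hxu)
    obtain ⟨I, hIT, hIQ⟩ := StarOperation.exists_mem_le_of_star_prod_eq_span hQ hxQ
      (fun hbot ↦ (hT ⊥ hbot).1.ne_bot rfl) hTx
    have hmin : P ∈ I.minimalPrimes := (hT I hIT).mem_minimalPrimes hs hP (hIQ.trans hQP.le)
    exact hQP.not_ge (hmin.2 ⟨hQ, hIQ⟩ hQP.le)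
  · obtain ⟨T, hT, hTx⟩ := hSH x hx hxu
    refine ⟨T, fun I hIT ↦ ?_, hTx⟩
    have hI := hT I hIT
    obtain ⟨P, hP, hIP⟩ := StarOperation.exists_le_isMaxStarIdeal hs hI.2.1 hI.1
    refine hI.isHomogType1_of_mem_minimalPrimes hs hP ⟨⟨hP.isPrime, hIP⟩, fun Q ⟨hQ, hIQ⟩ hQP ↦ ?_⟩
    by_contra hPQ
    exact ne_bot_of_le_ne_bot hI.ne_bot hIQ ((hht P hP).2 Q hQ (lt_of_le_not_ge hQP hPQ))
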